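/- arXiv:1501.02360 — 8 statements merged into one kernel-verified Lean document; each statement's English description precedes it below -/
import Mathlib

section
/- Let (H, A, C) be a Doi Hom-Hopf datum and (N, ν) a right (A,β)-Hom-module. Then N⊗C, equipped with the invertible map ν⊗γ, the right A-action (n⊗c)·a = n·a₀ ⊗ c·a₁ and the right C-coaction ρ(n⊗c) = (ν⁻¹(n)⊗c₁) ⊗ γ(c₂), is a Doi Hom-Hopf module over (H, A, C); in particular it is a right (A,β)-Hom-module, a right (C,γ)-Hom-comodule, and satisfies the compatibility condition ρ((n⊗c)·a) = (n⊗c)₀·a₀ ⊗ (n⊗c)₁·a₁. -/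
open TensorProduct

namespace DoiHomHopf

/-- A monoidal Hom-algebra `(A, β)`. -/
structure HomAlg (k : Type*) [CommRing k] (A : Type*) [AddCommGroup A] [Module k A] where
  str : A ≃ₗ[k] A
  mul : A →ₗ[k] A →ₗ[k] A
  one : A
  str_mul : ∀ a b, str (mul a b) = mul (str a) (str b)
  str_one : str one = one
  hom_assoc : ∀ a b c, mul (str a) (mul b c) = mul (mul a b) (str c)
  mul_one : ∀ a, mul a one = str a
  one_mul : ∀ a, mul one a = str a

/-- A monoidal Hom-coalgebra `(C, γ)`. -/
structure HomCoalg (k : Type*) [CommRing k] (C : Type*) [AddCommGroup C] [Module k C] where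
  str : C ≃ₗ[k] C
  comul : C →ₗ[k] C ⊗[k] C
  counit : C →ₗ[k] k
  comul_str : ∀ c, comul (str c) = TensorProduct.map str.toLinearMap str.toLinearMap (comul c)
  counit_str : ∀ c, counit (str c) = counit c
  hom_coassoc : ∀ c,
    TensorProduct.map str.symm.toLinearMap comul (comul c) =
      TensorProduct.assoc k C C C (TensorProduct.map comul str.symm.toLinearMap (comul c))
  counit_comul_left : ∀ c,
    TensorProduct.lid k C (TensorProduct.map counit LinearMap.id (comul c)) = str.symm c
  counit_comul_right : ∀ c,
    TensorProduct.rid k C (TensorProduct.map LinearMap.id counit (comul c)) = str.symm c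

/-- A monoidal Hom-bialgebra. -/
structure HomBialg (k : Type*) [CommRing k] (H : Type*) [AddCommGroup H] [Module k H]
    extends HomAlg k H, HomCoalg k H where
  comul_mul : ∀ a b, comul (mul a b) = TensorProduct.map₂ mul mul (comul a) (comul b)
  comul_one : comul one = one ⊗ₜ[k] one
  counit_mul : ∀ a b, counit (mul a b) = counit a * counit b
  counit_one : counit one = 1

/-- A monoidal Hom-Hopf algebra `(H, α)` with antipode `S`. -/
structure HomHopf (k : Type*) [CommRing k] (H : Type*) [AddCommGroup H] [Module k H]
    extends HomBialg k H where
  S : H →ₗ[k] H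
  S_mul_comul : ∀ h,
    TensorProduct.lift mul (TensorProduct.map S LinearMap.id (comul h)) = counit h • one
  mul_S_comul : ∀ h,
    TensorProduct.lift mul (TensorProduct.map LinearMap.id S (comul h)) = counit h • one
  S_str : ∀ h, S (str h) = str (S h)

/-- A right `(A, β)`-Hom-module `(M, μ)`. -/
structure HomMod {k : Type*} [CommRing k] {A : Type*} [AddCommGroup A] [Module k A]
    (hA : HomAlg k A) (M : Type*) [AddCommGroup M] [Module k M] where
  str : M ≃ₗ[k] M
  act : M →ₗ[k] A →ₗ[k] M
  act_act : ∀ m a b, act (act m a) (hA.str b) = act (str m) (hA.mul a b)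
  act_one : ∀ m, act m hA.one = str m
  str_act : ∀ m a, str (act m a) = act (str m) (hA.str a)

/-- A right `(C, γ)`-Hom-comodule `(M, μ)`. -/
structure HomComod {k : Type*} [CommRing k] {C : Type*} [AddCommGroup C] [Module k C]
    (hC : HomCoalg k C) (M : Type*) [AddCommGroup M] [Module k M] where
  str : M ≃ₗ[k] M
  coact : M →ₗ[k] M ⊗[k] C
  hom_coassoc : ∀ m,
    TensorProduct.assoc k M C C
        (TensorProduct.map coact hC.str.symm.toLinearMap (coact m)) =
      TensorProduct.map str.symm.toLinearMap hC.comul (coact m)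
  counit_coact : ∀ m,
    TensorProduct.rid k M (TensorProduct.map LinearMap.id hC.counit (coact m)) = str.symm m
  coact_str : ∀ m, coact (str m) = TensorProduct.map str.toLinearMap hC.str.toLinearMap (coact m)

/-- A right `(H, α)`-Hom-comodule algebra `(A, β)`. -/
structure HomComodAlg {k : Type*} [CommRing k] {H : Type*} [AddCommGroup H] [Module k H]
    (hH : HomBialg k H) (A : Type*) [AddCommGroup A] [Module k A] extends HomAlg k A where
  coact : A →ₗ[k] A ⊗[k] H
  hom_coassoc : ∀ a,
    TensorProduct.assoc k A H H
        (TensorProduct.map coact hH.str.symm.toLinearMap (coact a)) =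
      TensorProduct.map str.symm.toLinearMap hH.comul (coact a)
  counit_coact : ∀ a,
    TensorProduct.rid k A (TensorProduct.map LinearMap.id hH.counit (coact a)) = str.symm a
  coact_str : ∀ a, coact (str a) = TensorProduct.map str.toLinearMap hH.str.toLinearMap (coact a)
  coact_mul : ∀ a b, coact (mul a b) = TensorProduct.map₂ mul hH.mul (coact a) (coact b)
  coact_one : coact one = one ⊗ₜ[k] hH.one

/-- A right `(H, α)`-Hom-module coalgebra `(C, γ)`. -/
structure HomModCoalg {k : Type*} [CommRing k] {H : Type*} [AddCommGroup H] [Module k H]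
    (hH : HomBialg k H) (C : Type*) [AddCommGroup C] [Module k C] extends HomCoalg k C where
  act : C →ₗ[k] H →ₗ[k] C
  act_act : ∀ c h g, act (act c h) (hH.str g) = act (str c) (hH.mul h g)
  act_one : ∀ c, act c hH.one = str c
  str_act : ∀ c h, str (act c h) = act (str c) (hH.str h)
  comul_act : ∀ c h, comul (act c h) = TensorProduct.map₂ act act (comul c) (hH.comul h)
  counit_act : ∀ c h, counit (act c h) = counit c * hH.counit h

/-- A Doi Hom-Hopf module `(M, μ)` over the Doi Hom-Hopf datum `(H, A, C)`. -/
structure DoiMod {k : Type*} [CommRing k] {H A C : Type*}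
    [AddCommGroup H] [Module k H] [AddCommGroup A] [Module k A] [AddCommGroup C] [Module k C]
    {hH : HomBialg k H} (hA : HomComodAlg hH A) (hC : HomModCoalg hH C)
    (M : Type*) [AddCommGroup M] [Module k M] where
  str : M ≃ₗ[k] M
  act : M →ₗ[k] A →ₗ[k] M
  coact : M →ₗ[k] M ⊗[k] C
  act_act : ∀ m a b, act (act m a) (hA.str b) = act (str m) (hA.mul a b)
  act_one : ∀ m, act m hA.one = str m
  str_act : ∀ m a, str (act m a) = act (str m) (hA.str a)
  hom_coassoc : ∀ m,
    TensorProduct.assoc k M C C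
        (TensorProduct.map coact hC.str.symm.toLinearMap (coact m)) =
      TensorProduct.map str.symm.toLinearMap hC.comul (coact m)
  counit_coact : ∀ m,
    TensorProduct.rid k M (TensorProduct.map LinearMap.id hC.counit (coact m)) = str.symm m
  coact_str : ∀ m, coact (str m) = TensorProduct.map str.toLinearMap hC.str.toLinearMap (coact m)
  compat : ∀ m a,
    coact (act m a) = TensorProduct.map₂ act hC.act (coact m) (hA.coact a)

/-- `f` is a morphism of Doi Hom-Hopf modules. -/
structure IsDoiHom {k : Type*} [CommRing k] {H A C : Type*}
    [AddCommGroup H] [Module k H] [AddCommGroup A] [Module k A] [AddCommGroup C] [Module k C]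
    {hH : HomBialg k H} {hA : HomComodAlg hH A} {hC : HomModCoalg hH C}
    {M N : Type*} [AddCommGroup M] [Module k M] [AddCommGroup N] [Module k N]
    (dM : DoiMod hA hC M) (dN : DoiMod hA hC N) (f : M →ₗ[k] N) : Prop where
  str_comm : ∀ m, f (dM.str m) = dN.str (f m)
  act_comm : ∀ m a, f (dM.act m a) = dN.act (f m) a
  coact_comm : ∀ m, dN.coact (f m) = TensorProduct.map f LinearMap.id (dM.coact m)

/-- A normalized `(A, β)`-integral `θ : C ⊗ C → A` for the Doi Hom-Hopf datum `(H, A, C)`. -/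
structure NIntegral {k : Type*} [CommRing k] {H A C : Type*}
    [AddCommGroup H] [Module k H] [AddCommGroup A] [Module k A] [AddCommGroup C] [Module k C]
    {hH : HomBialg k H} (hA : HomComodAlg hH A) (hC : HomModCoalg hH C) where
  θ : C ⊗[k] C →ₗ[k] A
  θ_str : ∀ c d, θ (hC.str c ⊗ₜ[k] hC.str d) = hA.str (θ (c ⊗ₜ[k] d))
  cond1 : ∀ c d : C,
    TensorProduct.map (TensorProduct.curry θ (hC.str.symm d)) hC.str.toLinearMap (hC.comul c) =
      TensorProduct.map hA.str.toLinearMap (TensorProduct.lift hC.act)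
        ((TensorProduct.assoc k A C H)
          (TensorProduct.map (TensorProduct.comm k C A).toLinearMap LinearMap.id
            ((TensorProduct.assoc k C A H).symm
              (TensorProduct.map LinearMap.id
                (hA.coact ∘ₗ (TensorProduct.curry θ).flip (hC.str.symm c)) (hC.comul d)))))
  cond2 : ∀ c, θ (hC.comul c) = hC.counit c • hA.one
  cond3 : ∀ (a : A) (c d : C),
    TensorProduct.lift hA.mul
      (TensorProduct.map LinearMap.id θ
        ((TensorProduct.assoc k A C C)
          (TensorProduct.map
            (TensorProduct.map (hA.str.toLinearMap ∘ₗ hA.str.toLinearMap)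
              (hC.act (hC.str.symm d)))
            (hC.act (hC.str.symm c))
            (TensorProduct.map hA.coact hH.str.symm.toLinearMap (hA.coact a))))) =
      hA.mul (θ (d ⊗ₜ[k] c)) a

/-- The right `A`-action on `M ⊗ C` given by `(m ⊗ c) · a = m · a₀ ⊗ c · a₁`. -/
noncomputable def Gact {k : Type*} [CommRing k] {H A C : Type*}
    [AddCommGroup H] [Module k H] [AddCommGroup A] [Module k A] [AddCommGroup C] [Module k C]
    {hH : HomBialg k H} (hA : HomComodAlg hH A) (hC : HomModCoalg hH C)
    {M : Type*} [AddCommGroup M] [Module k M] (act : M →ₗ[k] A →ₗ[k] M) :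
    (M ⊗[k] C) →ₗ[k] A →ₗ[k] (M ⊗[k] C) :=
  (TensorProduct.map₂ act hC.act).compl₂ hA.coact

/-- The right `C`-coaction on `M ⊗ C` given by `ρ(m ⊗ c) = (μ⁻¹(m) ⊗ c₁) ⊗ γ(c₂)`. -/
noncomputable def Gcoact {k : Type*} [CommRing k] {C : Type*} [AddCommGroup C] [Module k C]
    (hC : HomCoalg k C) {M : Type*} [AddCommGroup M] [Module k M] (str : M ≃ₗ[k] M) :
    (M ⊗[k] C) →ₗ[k] (M ⊗[k] C) ⊗[k] C :=
  (TensorProduct.assoc k M C C).symm.toLinearMap ∘ₗ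
    TensorProduct.map str.symm.toLinearMap
      (TensorProduct.map LinearMap.id hC.str.toLinearMap ∘ₗ hC.comul)

/-- The counit of the adjunction: `δ_N(n ⊗ c) = ε(c) ν(n)`. -/
noncomputable def deltaMap {k : Type*} [CommRing k] {C : Type*} [AddCommGroup C] [Module k C]
    (hC : HomCoalg k C) {N : Type*} [AddCommGroup N] [Module k N] (str : N ≃ₗ[k] N) :
    (N ⊗[k] C) →ₗ[k] N :=
  str.toLinearMap ∘ₗ (TensorProduct.rid k N).toLinearMap ∘ₗ
    TensorProduct.map LinearMap.id hC.counit

/-- The map `ν_M : M ⊗ C → M`, `ν_M(m ⊗ c) = μ(m₀) · θ(m₁ ⊗ γ⁻¹(c))`. -/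
noncomputable def nuMap {k : Type*} [CommRing k] {H A C : Type*}
    [AddCommGroup H] [Module k H] [AddCommGroup A] [Module k A] [AddCommGroup C] [Module k C]
    {hH : HomBialg k H} {hA : HomComodAlg hH A} {hC : HomModCoalg hH C}
    {M : Type*} [AddCommGroup M] [Module k M]
    (θ : C ⊗[k] C →ₗ[k] A) (d : DoiMod hA hC M) : (M ⊗[k] C) →ₗ[k] M :=
  TensorProduct.lift d.act ∘ₗ TensorProduct.map d.str.toLinearMap θ ∘ₗ
    (TensorProduct.assoc k M C C).toLinearMap ∘ₗ
    TensorProduct.map d.coact hC.str.symm.toLinearMap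

end DoiHomHopf

open DoiHomHopf

namespace DoiAux

section
variable {k : Type*} [CommRing k] {M₁ M₂ N₁ N₂ P₁ P₂ Q₁ Q₂ : Type*}
  [AddCommGroup M₁] [Module k M₁] [AddCommGroup M₂] [Module k M₂]
  [AddCommGroup N₁] [Module k N₁] [AddCommGroup N₂] [Module k N₂]
  [AddCommGroup P₁] [Module k P₁] [AddCommGroup P₂] [Module k P₂]
  [AddCommGroup Q₁] [Module k Q₁] [AddCommGroup Q₂] [Module k Q₂]

/-- map of a map₂, when the factors intertwine. -/
theorem map_map₂ {M₁' M₂' N₁' N₂' : Type*}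
    [AddCommGroup M₁'] [Module k M₁'] [AddCommGroup M₂'] [Module k M₂']
    [AddCommGroup N₁'] [Module k N₁'] [AddCommGroup N₂'] [Module k N₂']
    (f : M₁ →ₗ[k] N₁ →ₗ[k] P₁) (g : M₂ →ₗ[k] N₂ →ₗ[k] P₂)
    (f' : M₁' →ₗ[k] N₁' →ₗ[k] Q₁) (g' : M₂' →ₗ[k] N₂' →ₗ[k] Q₂)
    (p : P₁ →ₗ[k] Q₁) (q : P₂ →ₗ[k] Q₂)
    (a : M₁ →ₗ[k] M₁') (b : N₁ →ₗ[k] N₁') (c : M₂ →ₗ[k] M₂') (d : N₂ →ₗ[k] N₂')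
    (h₁ : ∀ x y, p (f x y) = f' (a x) (b y)) (h₂ : ∀ x y, q (g x y) = g' (c x) (d y))
    (s : M₁ ⊗[k] M₂) (t : N₁ ⊗[k] N₂) :
    TensorProduct.map p q (TensorProduct.map₂ f g s t) =
      TensorProduct.map₂ f' g' (TensorProduct.map a c s) (TensorProduct.map b d t) := by
  induction s with
  | zero => simp
  | add x y hx hy => simp only [map_add, LinearMap.add_apply, hx, hy]
  | tmul m n =>
    induction t with
    | zero => simp
    | add x y hx hy => simp only [map_add, hx, hy]
    | tmul u v => simp [h₁, h₂]

theorem map₂_map₂ (f : M₁ →ₗ[k] N₁ →ₗ[k] M₁) (g : M₂ →ₗ[k] N₂ →ₗ[k] M₂)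
    (mf : N₁ →ₗ[k] N₁ →ₗ[k] N₁) (mg : N₂ →ₗ[k] N₂ →ₗ[k] N₂)
    (a : M₁ →ₗ[k] M₁) (b : N₁ →ₗ[k] N₁) (c : M₂ →ₗ[k] M₂) (d : N₂ →ₗ[k] N₂)
    (h₁ : ∀ x y z, f (f x y) (b z) = f (a x) (mf y z))
    (h₂ : ∀ x y z, g (g x y) (d z) = g (c x) (mg y z))
    (s : M₁ ⊗[k] M₂) (t u : N₁ ⊗[k] N₂) :
    TensorProduct.map₂ f g (TensorProduct.map₂ f g s t) (TensorProduct.map b d u) =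
      TensorProduct.map₂ f g (TensorProduct.map a c s) (TensorProduct.map₂ mf mg t u) := by
  induction s with
  | zero => simp
  | add x y hx hy => simp only [map_add, LinearMap.add_apply, hx, hy]
  | tmul m n =>
    induction t with
    | zero => simp
    | add x y hx hy => simp only [map_add, LinearMap.add_apply, hx, hy]
    | tmul p q =>
      induction u with
      | zero => simp
      | add x y hx hy => simp only [map_add, hx, hy]
      | tmul p q => simp [h₁, h₂]

end

section
variable {k : Type*} [CommRing k] {H A C N : Type*}
    [AddCommGroup H] [Module k H] [AddCommGroup A] [Module k A]
    [AddCommGroup C] [Module k C] [AddCommGroup N] [Module k N]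

theorem coassoc_aux (hC : HomCoalg k C) (s : N ≃ₗ[k] N) (m : N ⊗[k] C) :
    TensorProduct.assoc k (N ⊗[k] C) C C
        (TensorProduct.map (Gcoact hC s) hC.str.symm.toLinearMap (Gcoact hC s m)) =
      TensorProduct.map (TensorProduct.congr s hC.str).symm.toLinearMap hC.comul
        (Gcoact hC s m) := by
  induction m with
  | zero => simp
  | add x y hx hy => simp only [map_add, hx, hy]
  | tmul n c =>
    have key := hC.hom_coassoc c
    let F : C ⊗[k] (C ⊗[k] C) →ₗ[k] (N ⊗[k] C) ⊗[k] (C ⊗[k] C) :=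
      (TensorProduct.assoc k N C (C ⊗[k] C)).symm.toLinearMap ∘ₗ
        TensorProduct.mk k N _ (s.symm (s.symm n)) ∘ₗ
        TensorProduct.map LinearMap.id
          (TensorProduct.map hC.str.toLinearMap hC.str.toLinearMap)
    have hR : ∀ t : C ⊗[k] C,
        TensorProduct.map (TensorProduct.congr s hC.str).symm.toLinearMap hC.comul
          ((TensorProduct.assoc k N C C).symm
            (s.symm n ⊗ₜ[k] TensorProduct.map LinearMap.id hC.str.toLinearMap t)) =
        F (TensorProduct.map hC.str.symm.toLinearMap hC.comul t) := by
      intro t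
      induction t with
      | zero => simp
      | add x y hx hy => simp only [map_add, TensorProduct.tmul_add, hx, hy]
      | tmul x y => simp [F, hC.comul_str]
    have hL : ∀ t : C ⊗[k] C,
        TensorProduct.assoc k (N ⊗[k] C) C C
        (TensorProduct.map (Gcoact hC s) hC.str.symm.toLinearMap
          ((TensorProduct.assoc k N C C).symm
            (s.symm n ⊗ₜ[k] TensorProduct.map LinearMap.id hC.str.toLinearMap t))) =
        F (TensorProduct.assoc k C C C
          (TensorProduct.map hC.comul hC.str.symm.toLinearMap t)) := by
      intro t
      induction t with
      | zero => simp
      | add x y hx hy => simp only [map_add, TensorProduct.tmul_add, hx, hy]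
      | tmul x y =>
        simp only [Gcoact, TensorProduct.map_tmul, TensorProduct.assoc_symm_tmul,
          LinearMap.comp_apply, LinearEquiv.coe_coe, LinearMap.id_apply,
          LinearEquiv.symm_apply_apply]
        generalize hC.comul x = w
        induction w with
        | zero => simp
        | add x y hx hy =>
          simp only [map_add, TensorProduct.tmul_add, TensorProduct.add_tmul, hx, hy]
        | tmul u v => simp [F]
    have e : Gcoact hC s (n ⊗ₜ[k] c) = (TensorProduct.assoc k N C C).symm
            (s.symm n ⊗ₜ[k] TensorProduct.map LinearMap.id hC.str.toLinearMap (hC.comul c)) := by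
      simp [Gcoact]
    rw [e, hL, hR, key]

theorem counit_aux (hC : HomCoalg k C) (s : N ≃ₗ[k] N) (m : N ⊗[k] C) :
    TensorProduct.rid k (N ⊗[k] C)
      (TensorProduct.map LinearMap.id hC.counit (Gcoact hC s m)) =
      (TensorProduct.congr s hC.str).symm m := by
  induction m with
  | zero => simp
  | add x y hx hy => simp only [map_add, hx, hy]
  | tmul n c =>
    have key := hC.counit_comul_right c
    have h : ∀ t : C ⊗[k] C,
        TensorProduct.rid k (N ⊗[k] C) (TensorProduct.map LinearMap.id hC.counit
          ((TensorProduct.assoc k N C C).symm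
            (s.symm n ⊗ₜ[k] TensorProduct.map LinearMap.id hC.str.toLinearMap t))) =
        s.symm n ⊗ₜ[k] TensorProduct.rid k C (TensorProduct.map LinearMap.id hC.counit t) := by
      intro t
      induction t with
      | zero => simp
      | add x y hx hy => simp only [map_add, TensorProduct.tmul_add, hx, hy]
      | tmul x y => simp [hC.counit_str]
    simp only [Gcoact, TensorProduct.map_tmul, LinearMap.comp_apply, LinearEquiv.coe_coe]
    rw [h, key]
    simp

theorem coact_str_aux (hC : HomCoalg k C) (s : N ≃ₗ[k] N) (m : N ⊗[k] C) :
    Gcoact hC s (TensorProduct.congr s hC.str m) =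
      TensorProduct.map (TensorProduct.congr s hC.str).toLinearMap hC.str.toLinearMap
        (Gcoact hC s m) := by
  induction m with
  | zero => simp
  | add x y hx hy => simp only [map_add, hx, hy]
  | tmul n c =>
    simp only [Gcoact, TensorProduct.map_tmul, LinearMap.comp_apply, LinearEquiv.coe_coe,
      TensorProduct.congr_tmul, hC.comul_str, LinearEquiv.symm_apply_apply]
    generalize hC.comul c = t
    induction t with
    | zero => simp
    | add x y hx hy => simp only [map_add, TensorProduct.tmul_add, hx, hy]
    | tmul x y => simp

theorem compat_aux {hH : HomBialg k H} (hA : HomComodAlg hH A) (hC : HomModCoalg hH C)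
    (mN : HomMod hA.toHomAlg N) (m : N ⊗[k] C) (a : A) :
    Gcoact hC.toHomCoalg mN.str (Gact hA hC mN.act m a) =
      TensorProduct.map₂ (Gact hA hC mN.act) hC.act (Gcoact hC.toHomCoalg mN.str m)
        (hA.coact a) := by
  induction m with
  | zero => simp
  | add x y hx hy => simp only [map_add, LinearMap.add_apply, hx, hy]
  | tmul n c =>
    have key := hA.hom_coassoc a
    have hsym : ∀ x y, mN.str.symm (mN.act x y) = mN.act (mN.str.symm x) (hA.str.symm y) := by
      intro x y
      rw [LinearEquiv.symm_apply_eq, mN.str_act]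
      simp
    let G : (C ⊗[k] C) →ₗ[k] A ⊗[k] (H ⊗[k] H) →ₗ[k] (N ⊗[k] C) ⊗[k] C :=
      ((TensorProduct.map₂ mN.act (TensorProduct.map₂ hC.act hC.act)).compl₁₂
        (TensorProduct.mk k N _ (mN.str.symm n) ∘ₗ
          TensorProduct.map LinearMap.id hC.str.toLinearMap)
        (TensorProduct.map LinearMap.id
          (TensorProduct.map LinearMap.id hH.str.toLinearMap))).compr₂
        (TensorProduct.assoc k N C C).symm.toLinearMap
    have hL : ∀ w : A ⊗[k] H,
        Gcoact hC.toHomCoalg mN.str (TensorProduct.map₂ mN.act hC.act (n ⊗ₜ[k] c) w) =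
        G (hC.comul c) (TensorProduct.map hA.str.symm.toLinearMap hH.comul w) := by
      intro w
      induction w with
      | zero => simp
      | add x y hx hy => simp only [map_add, hx, hy]
      | tmul x y =>
        simp only [Gcoact, G, TensorProduct.map_tmul, LinearMap.comp_apply, LinearEquiv.coe_coe,
          TensorProduct.map₂_apply_tmul, LinearMap.compr₂_apply, LinearMap.compl₁₂_apply,
          TensorProduct.mk_apply, LinearMap.id_apply, hsym, hC.comul_act]
        rw [map_map₂ hC.act hC.act hC.act hC.act LinearMap.id hC.str.toLinearMap
          LinearMap.id LinearMap.id hC.str.toLinearMap hH.str.toLinearMap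
          (fun _ _ => rfl) (fun x y => hC.str_act x y)]
    have hR : ∀ (t : C ⊗[k] C) (w : A ⊗[k] H),
        TensorProduct.map₂ (Gact hA hC mN.act) hC.act
          ((TensorProduct.assoc k N C C).symm
            (mN.str.symm n ⊗ₜ[k] TensorProduct.map LinearMap.id hC.str.toLinearMap t)) w =
        G t (TensorProduct.assoc k A H H
          (TensorProduct.map hA.coact hH.str.symm.toLinearMap w)) := by
      intro t w
      induction t with
      | zero => simp
      | add x y hx hy =>
        simp only [map_add, TensorProduct.tmul_add, LinearMap.add_apply, hx, hy]
      | tmul x y =>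
        induction w with
        | zero => simp
        | add x y hx hy => simp only [map_add, hx, hy]
        | tmul p q =>
          simp only [Gact, TensorProduct.map_tmul, TensorProduct.assoc_symm_tmul,
            TensorProduct.map₂_apply_tmul, LinearMap.compl₂_apply, LinearMap.id_apply,
            LinearEquiv.coe_coe]
          generalize hA.coact p = v
          induction v with
          | zero => simp
          | add x y hx hy => simp only [map_add, TensorProduct.add_tmul, hx, hy]
          | tmul u v => simp [G]
    have e : Gcoact hC.toHomCoalg mN.str (n ⊗ₜ[k] c) = (TensorProduct.assoc k N C C).symm
        (mN.str.symm n ⊗ₜ[k]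
          TensorProduct.map LinearMap.id hC.str.toLinearMap (hC.comul c)) := by
      simp [Gcoact]
    rw [e, hR, key, ← hL]
    rfl

end

end DoiAux

/-- For a Doi Hom-Hopf datum `(H, A, C)` and a right `(A, β)`-Hom-module `(N, ν)`,
`N ⊗ C` with structure map `ν ⊗ γ`, action `(n ⊗ c) · a = n · a₀ ⊗ c · a₁` and coaction
`ρ(n ⊗ c) = (ν⁻¹(n) ⊗ c₁) ⊗ γ(c₂)` is a Doi Hom-Hopf module. -/
theorem tensor_with_C_isDoiModule {k : Type*} [CommRing k] {H A C N : Type*}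
    [AddCommGroup H] [Module k H] [AddCommGroup A] [Module k A]
    [AddCommGroup C] [Module k C] [AddCommGroup N] [Module k N]
    (hH : HomHopf k H) (hA : HomComodAlg hH.toHomBialg A) (hC : HomModCoalg hH.toHomBialg C)
    (mN : HomMod hA.toHomAlg N) :
    ∃ d : DoiMod hA hC (N ⊗[k] C),
      d.str = TensorProduct.congr mN.str hC.str ∧
      d.act = Gact hA hC mN.act ∧
      d.coact = Gcoact hC.toHomCoalg mN.str := by
  refine ⟨{ str := TensorProduct.congr mN.str hC.str
            act := Gact hA hC mN.act
            coact := Gcoact hC.toHomCoalg mN.str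
            act_act := ?_
            act_one := ?_
            str_act := ?_
            hom_coassoc := DoiAux.coassoc_aux hC.toHomCoalg mN.str
            counit_coact := DoiAux.counit_aux hC.toHomCoalg mN.str
            coact_str := DoiAux.coact_str_aux hC.toHomCoalg mN.str
            compat := DoiAux.compat_aux hA hC mN }, rfl, rfl, rfl⟩
  · intro m a b
    simp only [Gact, LinearMap.compl₂_apply, hA.coact_str, hA.coact_mul]
    exact DoiAux.map₂_map₂ mN.act hC.act hA.mul hH.mul mN.str.toLinearMap hA.str.toLinearMap
      hC.str.toLinearMap hH.str.toLinearMap mN.act_act hC.act_act m _ _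
  · intro m
    simp only [Gact, LinearMap.compl₂_apply, hA.coact_one]
    induction m with
    | zero => simp
    | add x y hx hy => simp only [map_add, LinearMap.add_apply, hx, hy]
    | tmul n c => simp [mN.act_one, hC.act_one]
  · intro m a
    simp only [Gact, LinearMap.compl₂_apply, hA.coact_str]
    exact DoiAux.map_map₂ mN.act hC.act mN.act hC.act mN.str.toLinearMap hC.str.toLinearMap
      mN.str.toLinearMap hA.str.toLinearMap hC.str.toLinearMap hH.str.toLinearMap
      mN.str_act hC.str_act m _
end

section
/- Let (H, A, C) be a Doi Hom-Hopf datum and (M, μ) a Doi Hom-Hopf module over it. Then the coaction map η_M : M → M⊗C, η_M(m) = m₀⊗m₁, is a morphism of Doi Hom-Hopf modules from M to G(M) = M⊗C (with action (m⊗c)·a = m·a₀ ⊗ c·a₁ and coaction ρ_{G(M)}(m⊗c) = (μ⁻¹(m)⊗c₁)⊗γ(c₂)); that is, (μ⊗γ)∘η_M = η_M∘μ, η_M(m·a) = η_M(m)·a for all m ∈ M, a ∈ A, and ρ_{G(M)}∘η_M = (η_M⊗id_C)∘ρ_M. -/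
open TensorProduct

open DoiHomHopf

/-- The coaction `η_M = ρ_M : M → M ⊗ C` is a morphism of Doi Hom-Hopf modules
from `M` to `G(M) = M ⊗ C`. -/
theorem coaction_isDoiModuleHom {k : Type*} [CommRing k] {H A C M : Type*}
    [AddCommGroup H] [Module k H] [AddCommGroup A] [Module k A]
    [AddCommGroup C] [Module k C] [AddCommGroup M] [Module k M]
    (hH : HomHopf k H) (hA : HomComodAlg hH.toHomBialg A) (hC : HomModCoalg hH.toHomBialg C)
    (dM : DoiMod hA hC M) :
    (∀ m : M, dM.coact (dM.str m) = TensorProduct.congr dM.str hC.str (dM.coact m)) ∧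
    (∀ (m : M) (a : A), dM.coact (dM.act m a) = Gact hA hC dM.act (dM.coact m) a) ∧
    (∀ m : M, Gcoact hC.toHomCoalg dM.str (dM.coact m) =
      TensorProduct.map dM.coact LinearMap.id (dM.coact m)) := by
  refine ⟨fun m => dM.coact_str m, fun m a => dM.compat m a, fun m => ?_⟩
  have h1 : ∀ x : M ⊗[k] C, Gcoact hC.toHomCoalg dM.str x =
      (TensorProduct.assoc k M C C).symm
        (TensorProduct.map LinearMap.id (TensorProduct.map LinearMap.id hC.str.toLinearMap)
          (TensorProduct.map dM.str.symm.toLinearMap hC.comul x)) := by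
    intro x
    induction x using TensorProduct.induction_on with
    | zero => simp
    | tmul m c => simp [Gcoact]
    | add x y hx hy => simp only [map_add, hx, hy]
  have h2 : ∀ y : (M ⊗[k] C) ⊗[k] C,
      (TensorProduct.assoc k M C C).symm
        (TensorProduct.map LinearMap.id (TensorProduct.map LinearMap.id hC.str.toLinearMap)
          (TensorProduct.assoc k M C C y)) =
      TensorProduct.map LinearMap.id hC.str.toLinearMap y := by
    intro y
    induction y using TensorProduct.induction_on with
    | zero => simp
    | tmul z c =>
      induction z using TensorProduct.induction_on with
      | zero => simp
      | tmul m d => simp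
      | add x y hx hy => simp only [TensorProduct.add_tmul, map_add, hx, hy]
    | add x y hx hy => simp only [map_add, hx, hy]
  rw [h1, ← dM.hom_coassoc, h2, ← LinearMap.comp_apply, ← TensorProduct.map_comp]
  congr 2
  ext c
  simp
end

section
/- Let (H, A, C) be a Doi Hom-Hopf datum. For every right (A,β)-Hom-module (N, ν) and every Doi Hom-Hopf module (M, μ), the triangle identities of the adjunction hold: (δ_N⊗id_C)∘ρ_{G(N)} = id_{N⊗C} and δ_M∘η_M = id_M, where η_M(m) = m₀⊗m₁ is the C-coaction of M, δ_N(n⊗c) = ε(c)ν(n), and ρ_{G(N)}(n⊗c) = (ν⁻¹(n)⊗c₁)⊗γ(c₂). (Hence the forgetful functor from Doi Hom-Hopf modules to right (A,β)-Hom-modules has the functor G(N) = N⊗C as a right adjoint.) -/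
open TensorProduct

open DoiHomHopf

/-- The triangle identities of the adjunction between the forgetful functor and
`G(N) = N ⊗ C` hold: `(δ_N ⊗ id_C) ∘ ρ_{G(N)} = id` and `δ_M ∘ η_M = id`. -/
theorem triangle_identities {k : Type*} [CommRing k] {H A C N M : Type*}
    [AddCommGroup H] [Module k H] [AddCommGroup A] [Module k A]
    [AddCommGroup C] [Module k C] [AddCommGroup N] [Module k N] [AddCommGroup M] [Module k M]
    (hH : HomHopf k H) (hA : HomComodAlg hH.toHomBialg A) (hC : HomModCoalg hH.toHomBialg C)
    (mN : HomMod hA.toHomAlg N) (dM : DoiMod hA hC M) :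
    (∀ x : N ⊗[k] C,
      TensorProduct.map (deltaMap hC.toHomCoalg mN.str) LinearMap.id
        (Gcoact hC.toHomCoalg mN.str x) = x) ∧
    (∀ m : M, deltaMap hC.toHomCoalg dM.str (dM.coact m) = m) := by
  constructor
  · intro x
    induction x with
    | zero => simp
    | add x y hx hy => rw [map_add, map_add, hx, hy]
    | tmul n c =>
      have key : ∀ t : C ⊗[k] C,
          TensorProduct.map (deltaMap hC.toHomCoalg mN.str) LinearMap.id
            ((TensorProduct.assoc k N C C).symm (mN.str.symm n ⊗ₜ[k]
              (TensorProduct.map LinearMap.id hC.str.toLinearMap t))) =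
          n ⊗ₜ[k] hC.str (TensorProduct.lid k C
            (TensorProduct.map hC.counit LinearMap.id t)) := by
        intro t
        induction t with
        | zero => simp
        | add x y hx hy => simp only [map_add, TensorProduct.tmul_add, hx, hy]
        | tmul a b =>
          simp [deltaMap, TensorProduct.smul_tmul]
      have h := key (hC.comul c)
      rw [hC.counit_comul_left, LinearEquiv.apply_symm_apply] at h
      simpa [Gcoact] using h
  · intro m
    have h := dM.counit_coact m
    simp only [deltaMap, LinearMap.comp_apply, LinearEquiv.coe_coe]
    rw [h, LinearEquiv.apply_symm_apply]
end

section
/- Let (H, A, C) be a Doi Hom-Hopf datum, θ : C⊗C → A a normalized (A,β)-integral, and (M, μ) a Doi Hom-Hopf module. Define ν_M : M⊗C → M by ν_M(m⊗c) = μ(m₀)·θ(m₁⊗γ⁻¹(c)). Then ν_M(μ(m)⊗γ(c)) = μ(ν_M(m⊗c)) and ν_M is right A-linear for the action (m⊗c)·a = m·a₀ ⊗ c·a₁ on M⊗C; that is, ν_M((m⊗c)·a) = ν_M(m⊗c)·a for all m ∈ M, c ∈ C, a ∈ A. -/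
open TensorProduct

open DoiHomHopf

/-- For a normalized `(A, β)`-integral `θ` and a Doi Hom-Hopf module `(M, μ)`,
the map `ν_M(m ⊗ c) = μ(m₀) · θ(m₁ ⊗ γ⁻¹(c))` commutes with the structure maps and is
right `A`-linear. -/
theorem nu_strComm_and_ALinear {k : Type*} [CommRing k] {H A C M : Type*}
    [AddCommGroup H] [Module k H] [AddCommGroup A] [Module k A]
    [AddCommGroup C] [Module k C] [AddCommGroup M] [Module k M]
    (hH : HomHopf k H) (hA : HomComodAlg hH.toHomBialg A) (hC : HomModCoalg hH.toHomBialg C)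
    (θi : NIntegral hA hC) (dM : DoiMod hA hC M) :
    (∀ x : M ⊗[k] C,
      nuMap θi.θ dM (TensorProduct.congr dM.str hC.str x) = dM.str (nuMap θi.θ dM x)) ∧
    (∀ (x : M ⊗[k] C) (a : A),
      nuMap θi.θ dM (Gact hA hC dM.act x a) = dM.act (nuMap θi.θ dM x) a) := by
  have hsymm : ∀ (c : C) (z : H), hC.str.symm (hC.act c (hH.str z)) =
      hC.act (hC.str.symm c) z := by
    intro c z
    rw [LinearEquiv.symm_apply_eq, hC.str_act, LinearEquiv.apply_symm_apply]
  constructor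
  · intro x
    induction x using TensorProduct.induction_on with
    | zero => simp
    | add x y hx hy => simp only [map_add, hx, hy]
    | tmul m c =>
      simp only [nuMap, LinearMap.comp_apply, TensorProduct.congr_tmul, TensorProduct.map_tmul,
        LinearEquiv.coe_coe, dM.coact_str, LinearEquiv.symm_apply_apply]
      generalize dM.coact m = s
      induction s using TensorProduct.induction_on with
      | zero => simp
      | add x y hx hy => simp only [map_add, TensorProduct.add_tmul, hx, hy]
      | tmul n e =>
        simp only [TensorProduct.map_tmul, TensorProduct.assoc_tmul, TensorProduct.lift.tmul,
          LinearEquiv.coe_coe, dM.str_act, ← θi.θ_str, LinearEquiv.apply_symm_apply]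
  · intro x a
    induction x using TensorProduct.induction_on with
    | zero => simp
    | add x y hx hy => simp only [map_add, LinearMap.add_apply, hx, hy]
    | tmul m c =>
      obtain ⟨b, rfl⟩ := hA.str.surjective a
      -- the compatibility of the coaction with the action
      have h1 : ∀ u : A ⊗[k] H,
          TensorProduct.map dM.coact hC.str.symm.toLinearMap
            (TensorProduct.map₂ dM.act hC.act (m ⊗ₜ[k] c)
              (TensorProduct.map hA.str.toLinearMap hH.str.toLinearMap u)) =
          TensorProduct.map₂ (TensorProduct.map₂ dM.act hC.act) hC.act
            (dM.coact m ⊗ₜ[k] hC.str.symm c)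
            (TensorProduct.map (TensorProduct.map hA.str.toLinearMap hH.str.toLinearMap)
              hH.str.toLinearMap (TensorProduct.map hA.coact hH.str.symm.toLinearMap u)) := by
        intro u
        induction u using TensorProduct.induction_on with
        | zero => simp
        | add x y hx hy => simp only [map_add, hx, hy]
        | tmul x z =>
          simp only [TensorProduct.map_tmul, TensorProduct.map₂_apply_tmul, LinearEquiv.coe_coe,
            dM.compat, hA.coact_str, hsymm, LinearEquiv.apply_symm_apply]
      have h2 : ∀ (n : M) (e : C) (w : (A ⊗[k] H) ⊗[k] H),
          TensorProduct.lift dM.act (TensorProduct.map dM.str.toLinearMap θi.θ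
            (TensorProduct.assoc k M C C
              (TensorProduct.map₂ (TensorProduct.map₂ dM.act hC.act) hC.act
                ((n ⊗ₜ[k] e) ⊗ₜ[k] hC.str.symm c)
                (TensorProduct.map (TensorProduct.map hA.str.toLinearMap hH.str.toLinearMap)
                  hH.str.toLinearMap w)))) =
          dM.act (dM.str (dM.str n)) (TensorProduct.lift hA.mul
            (TensorProduct.map LinearMap.id θi.θ
              ((TensorProduct.assoc k A C C)
                (TensorProduct.map
                  (TensorProduct.map (hA.str.toLinearMap ∘ₗ hA.str.toLinearMap)
                    (hC.act (hC.str.symm e)))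
                  (hC.act (hC.str.symm (hC.str.symm c))) w)))) := by
        intro n e w
        induction w using TensorProduct.induction_on with
        | zero => simp
        | add x y hx hy => simp only [map_add, hx, hy]
        | tmul v z =>
          induction v using TensorProduct.induction_on with
          | zero => simp
          | add x y hx hy => simp only [map_add, TensorProduct.add_tmul, hx, hy]
          | tmul x y =>
            simp only [TensorProduct.map_tmul, TensorProduct.map₂_apply_tmul,
              LinearEquiv.coe_coe, TensorProduct.assoc_tmul, TensorProduct.lift.tmul,
              LinearMap.comp_apply, LinearMap.id_apply, ← dM.act_act, ← θi.θ_str, hC.str_act,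
              LinearEquiv.apply_symm_apply, dM.str_act]
      simp only [nuMap, Gact, LinearMap.comp_apply, LinearMap.compl₂_apply, LinearEquiv.coe_coe,
        hA.coact_str, h1]
      rw [TensorProduct.map_tmul, LinearEquiv.coe_coe]
      generalize dM.coact m = s
      induction s using TensorProduct.induction_on with
      | zero => simp
      | add x y hx hy =>
        simp only [map_add, TensorProduct.add_tmul, LinearMap.add_apply, hx, hy]
      | tmul n e =>
        rw [h2, θi.cond3]
        simp only [TensorProduct.map_tmul, TensorProduct.assoc_tmul, TensorProduct.lift.tmul,
          LinearEquiv.coe_coe, dM.act_act]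
end

section
/- Let (H, A, C) be a Doi Hom-Hopf datum, θ : C⊗C → A a normalized (A,β)-integral, and (M, μ) a Doi Hom-Hopf module. Define ν_M : M⊗C → M by ν_M(m⊗c) = μ(m₀)·θ(m₁⊗γ⁻¹(c)). Then ν_M is right C-colinear: ρ_M∘ν_M = (ν_M⊗id_C)∘ρ_{M⊗C}, where ρ_{M⊗C}(m⊗c) = (μ⁻¹(m)⊗c₁)⊗γ(c₂). -/
open TensorProduct

open DoiHomHopf

namespace NuAux

variable {k : Type*} [CommRing k] {H A C M : Type*}
    [AddCommGroup H] [Module k H] [AddCommGroup A] [Module k A]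
    [AddCommGroup C] [Module k C] [AddCommGroup M] [Module k M]
    {hH : HomBialg k H} {hA : HomComodAlg hH A} {hC : HomModCoalg hH C}

noncomputable def K (θi : NIntegral hA hC) (c : C) : C ⊗[k] C →ₗ[k] A ⊗[k] C :=
  TensorProduct.map LinearMap.id (TensorProduct.lift hC.act) ∘ₗ
    (TensorProduct.assoc k A C H).toLinearMap ∘ₗ
    TensorProduct.map (TensorProduct.comm k C A).toLinearMap LinearMap.id ∘ₗ
    (TensorProduct.assoc k C A H).symm.toLinearMap ∘ₗ
    TensorProduct.map LinearMap.id
      (hA.coact ∘ₗ (TensorProduct.curry θi.θ).flip (hC.str.symm c))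

noncomputable def G (θi : NIntegral hA hC) (dM : DoiMod hA hC M) (c : C) :
    M ⊗[k] (C ⊗[k] C) →ₗ[k] M ⊗[k] C :=
  TensorProduct.map (TensorProduct.lift dM.act) LinearMap.id ∘ₗ
    (TensorProduct.assoc k M A C).symm.toLinearMap ∘ₗ
    TensorProduct.map dM.str.toLinearMap
      (K θi c ∘ₗ TensorProduct.map hC.str.toLinearMap hC.str.toLinearMap)

theorem G_aux (θi : NIntegral hA hC) (dM : DoiMod hA hC M) (c a : C) (s : M ⊗[k] C) :
    TensorProduct.map₂ dM.act hC.act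
      (TensorProduct.map dM.str.toLinearMap hC.str.toLinearMap s)
      (hA.coact (θi.θ (a ⊗ₜ[k] hC.str.symm c))) =
    G θi dM c (TensorProduct.assoc k M C C (s ⊗ₜ[k] hC.str.symm a)) := by
  induction s with
  | zero => simp
  | add x y hx hy => simp only [map_add, LinearMap.add_apply, TensorProduct.add_tmul, hx, hy]
  | tmul n b =>
    simp only [G, K, LinearMap.comp_apply, LinearEquiv.coe_coe, TensorProduct.map_tmul,
      TensorProduct.assoc_tmul, LinearEquiv.apply_symm_apply, LinearMap.flip_apply,
      TensorProduct.curry_apply, LinearMap.id_apply]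
    generalize hA.coact (θi.θ (a ⊗ₜ[k] hC.str.symm c)) = r
    induction r with
    | zero => simp
    | add x y hx hy => simp only [map_add, TensorProduct.tmul_add, hx, hy]
    | tmul x y => simp

theorem lhs (θi : NIntegral hA hC) (dM : DoiMod hA hC M) (c : C) (t : M ⊗[k] C) :
    dM.coact (TensorProduct.lift dM.act (TensorProduct.map dM.str.toLinearMap θi.θ
      (TensorProduct.assoc k M C C (t ⊗ₜ[k] hC.str.symm c)))) =
    G θi dM c (TensorProduct.assoc k M C C
      (TensorProduct.map dM.coact hC.str.symm.toLinearMap t)) := by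
  induction t with
  | zero => simp
  | add x y hx hy => simp only [map_add, TensorProduct.add_tmul, hx, hy]
  | tmul n b =>
    simp only [TensorProduct.map_tmul, TensorProduct.assoc_tmul, TensorProduct.lift.tmul,
      LinearEquiv.coe_coe]
    rw [dM.compat, dM.coact_str, G_aux]

theorem K_comul (θi : NIntegral hA hC) (c a : C) :
    K θi c (hC.comul (hC.str a)) =
      TensorProduct.map (hA.str.symm.toLinearMap ∘ₗ TensorProduct.curry θi.θ a)
        hC.str.toLinearMap (hC.comul c) := by
  have h := θi.cond1 c (hC.str a)
  rw [LinearEquiv.symm_apply_apply] at h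
  have h2 : TensorProduct.map hA.str.toLinearMap LinearMap.id (K θi c (hC.comul (hC.str a))) =
      TensorProduct.map (TensorProduct.curry θi.θ a) hC.str.toLinearMap (hC.comul c) := by
    rw [h]
    simp only [K, LinearMap.comp_apply, LinearEquiv.coe_coe]
    rw [← LinearMap.comp_apply (TensorProduct.map _ _) (TensorProduct.map _ _),
      ← TensorProduct.map_comp]
    rfl
  have h3 := congrArg (TensorProduct.map hA.str.symm.toLinearMap
    (LinearMap.id : C →ₗ[k] C)) h2
  rw [← LinearMap.comp_apply (TensorProduct.map _ _) (TensorProduct.map _ _),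
    ← LinearMap.comp_apply (TensorProduct.map _ _) (TensorProduct.map _ _),
    ← TensorProduct.map_comp, ← TensorProduct.map_comp] at h3
  simpa using h3

theorem coact_symm (dM : DoiMod hA hC M) (m : M) :
    dM.coact (dM.str.symm m) =
      TensorProduct.map dM.str.symm.toLinearMap hC.str.symm.toLinearMap (dM.coact m) := by
  have h := dM.coact_str (dM.str.symm m)
  rw [LinearEquiv.apply_symm_apply] at h
  rw [h, ← LinearMap.comp_apply, ← TensorProduct.map_comp]
  simp

theorem θ_symm (θi : NIntegral hA hC) (a u : C) :
    θi.θ (hC.str.symm a ⊗ₜ[k] hC.str.symm u) = hA.str.symm (θi.θ (a ⊗ₜ[k] u)) := by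
  rw [LinearEquiv.eq_symm_apply, ← θi.θ_str]
  simp

theorem nu_tmul (θi : NIntegral hA hC) (dM : DoiMod hA hC M) (m : M) (c : C) :
    nuMap θi.θ dM (m ⊗ₜ[k] c) =
      TensorProduct.lift dM.act (TensorProduct.map dM.str.toLinearMap θi.θ
        (TensorProduct.assoc k M C C (dM.coact m ⊗ₜ[k] hC.str.symm c))) := by
  simp [nuMap]

/-- The common value: `n ⊗ a ↦ n · β⁻¹ θ(a ⊗ u) ⊗ γ v`, summed over `u ⊗ v = w`. -/
noncomputable def P (θi : NIntegral hA hC) (dM : DoiMod hA hC M) (w : C ⊗[k] C) :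
    M ⊗[k] C →ₗ[k] M ⊗[k] C :=
  TensorProduct.lift (LinearMap.mk₂ k
    (fun n a => TensorProduct.map (dM.act n ∘ₗ hA.str.symm.toLinearMap ∘ₗ
      TensorProduct.curry θi.θ a) hC.str.toLinearMap w)
    (by intros; simp [LinearMap.add_comp, TensorProduct.map_add_left])
    (by intros; simp [LinearMap.smul_comp, TensorProduct.map_smul_left])
    (by intros; simp [LinearMap.comp_add, TensorProduct.map_add_left])
    (by intros; simp [LinearMap.comp_smul, TensorProduct.map_smul_left]))

theorem P_tmul (θi : NIntegral hA hC) (dM : DoiMod hA hC M) (w : C ⊗[k] C) (n : M) (a : C) :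
    P θi dM w (n ⊗ₜ[k] a) = TensorProduct.map (dM.act n ∘ₗ hA.str.symm.toLinearMap ∘ₗ
      TensorProduct.curry θi.θ a) hC.str.toLinearMap w := by
  simp [P]

theorem G_P (θi : NIntegral hA hC) (dM : DoiMod hA hC M) (c : C) (t : M ⊗[k] C) :
    G θi dM c (TensorProduct.map dM.str.symm.toLinearMap hC.comul t) =
      P θi dM (hC.comul c) t := by
  induction t with
  | zero => simp
  | add x y hx hy => simp only [map_add, hx, hy]
  | tmul n a =>
    rw [P_tmul]
    simp only [G, LinearMap.comp_apply, LinearEquiv.coe_coe, TensorProduct.map_tmul,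
      LinearEquiv.apply_symm_apply]
    rw [← hC.comul_str, K_comul]
    generalize hC.comul c = w
    induction w with
    | zero => simp
    | add x y hx hy => simp only [map_add, TensorProduct.tmul_add, hx, hy]
    | tmul x y => simp

theorem rhs (θi : NIntegral hA hC) (dM : DoiMod hA hC M) (m : M) (w : C ⊗[k] C) :
    TensorProduct.map (nuMap θi.θ dM) LinearMap.id ((TensorProduct.assoc k M C C).symm
      (dM.str.symm m ⊗ₜ[k] TensorProduct.map LinearMap.id hC.str.toLinearMap w)) =
      P θi dM w (dM.coact m) := by
  induction w with
  | zero =>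
    generalize dM.coact m = t
    induction t with
    | zero => simp
    | add x y hx hy => rw [map_add, ← hx, ← hy]; simp
    | tmul x y => rw [P_tmul]; simp
  | add x y hx hy =>
    have : P θi dM (x + y) (dM.coact m) = P θi dM x (dM.coact m) + P θi dM y (dM.coact m) := by
      generalize dM.coact m = t
      induction t with
      | zero => simp
      | add p q hp hq => simp only [map_add, hp, hq]; abel
      | tmul p q => simp only [P_tmul, map_add]
    simp only [map_add, TensorProduct.tmul_add, hx, hy, this]
  | tmul u v =>
    simp only [TensorProduct.map_tmul, TensorProduct.assoc_symm_tmul, nu_tmul, coact_symm]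
    generalize dM.coact m = t
    induction t with
    | zero => simp
    | add p q hp hq => simp only [map_add, TensorProduct.add_tmul, hp, hq]
    | tmul p q => simp [P_tmul, θ_symm]

end NuAux

/-- For a normalized `(A, β)`-integral `θ` and a Doi Hom-Hopf module `(M, μ)`,
`ν_M(m ⊗ c) = μ(m₀) · θ(m₁ ⊗ γ⁻¹(c))` is right `C`-colinear. -/
theorem nu_CColinear {k : Type*} [CommRing k] {H A C M : Type*}
    [AddCommGroup H] [Module k H] [AddCommGroup A] [Module k A]
    [AddCommGroup C] [Module k C] [AddCommGroup M] [Module k M]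
    (hH : HomHopf k H) (hA : HomComodAlg hH.toHomBialg A) (hC : HomModCoalg hH.toHomBialg C)
    (θi : NIntegral hA hC) (dM : DoiMod hA hC M) :
    ∀ x : M ⊗[k] C,
      dM.coact (nuMap θi.θ dM x) =
        TensorProduct.map (nuMap θi.θ dM) LinearMap.id (Gcoact hC.toHomCoalg dM.str x) := by
  intro x
  induction x with
  | zero => simp
  | add x y hx hy => simp only [map_add, hx, hy]
  | tmul m c =>
    rw [NuAux.nu_tmul, NuAux.lhs, dM.hom_coassoc, NuAux.G_P, ← NuAux.rhs]
    rfl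
end

section
/- Let (H, A, C) be a Doi Hom-Hopf datum, θ : C⊗C → A a normalized (A,β)-integral, and (M, μ) a Doi Hom-Hopf module with coaction ρ_M(m) = m₀⊗m₁. Define ν_M : M⊗C → M by ν_M(m⊗c) = μ(m₀)·θ(m₁⊗γ⁻¹(c)). Then ν_M is a retraction of the coaction: ν_M(m₀⊗m₁) = m for all m ∈ M. -/
open TensorProduct

open DoiHomHopf

/-- For a normalized `(A, β)`-integral `θ` and a Doi Hom-Hopf module `(M, μ)`,
`ν_M` is a retraction of the coaction: `ν_M(m₀ ⊗ m₁) = m`. -/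
theorem nu_retracts_coaction {k : Type*} [CommRing k] {H A C M : Type*}
    [AddCommGroup H] [Module k H] [AddCommGroup A] [Module k A]
    [AddCommGroup C] [Module k C] [AddCommGroup M] [Module k M]
    (hH : HomHopf k H) (hA : HomComodAlg hH.toHomBialg A) (hC : HomModCoalg hH.toHomBialg C)
    (θi : NIntegral hA hC) (dM : DoiMod hA hC M) :
    ∀ m : M, nuMap θi.θ dM (dM.coact m) = m := by
  intro m
  have key : ∀ x : M ⊗[k] C,
      TensorProduct.lift dM.act (TensorProduct.map dM.str.toLinearMap θi.θ
        (TensorProduct.map dM.str.symm.toLinearMap hC.comul x)) =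
      dM.str (TensorProduct.rid k M (TensorProduct.map LinearMap.id hC.counit x)) := by
    intro x
    induction x using TensorProduct.induction_on with
    | zero => simp
    | tmul a c => simp [θi.cond2, dM.act_one]
    | add x y hx hy => simp only [map_add, hx, hy]
  have h := key (dM.coact m)
  rw [dM.counit_coact, ← dM.hom_coassoc, LinearEquiv.apply_symm_apply] at h
  exact h
end

section
/- (Maschke-type theorem, injective case.) Let (H, A, C) be a Doi Hom-Hopf datum admitting a normalized (A,β)-integral θ : C⊗C → A, and let f : (M,μ) → (N,ν) be a morphism of Doi Hom-Hopf modules. If there exists a k-linear map g : N → M with g∘ν = μ∘g, g(n·a) = g(n)·a for all n ∈ N, a ∈ A, and g∘f = id_M (i.e. f splits as a morphism of right (A,β)-Hom-modules), then there exists a morphism of Doi Hom-Hopf modules g' : N → M with g'∘f = id_M (i.e. f splits in the category of Doi Hom-Hopf modules). -/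
open TensorProduct

open DoiHomHopf

section helpers
variable {k : Type*} [CommRing k] {H A C M N : Type*}
    [AddCommGroup H] [Module k H] [AddCommGroup A] [Module k A]
    [AddCommGroup C] [Module k C] [AddCommGroup M] [Module k M] [AddCommGroup N] [Module k N]
    {hH : HomBialg k H} {hA : HomComodAlg hH A} {hC : HomModCoalg hH C}

theorem aux_θ_symm (θi : NIntegral hA hC) (c d : C) :
    θi.θ (hC.str.symm c ⊗ₜ[k] hC.str.symm d) = hA.str.symm (θi.θ (c ⊗ₜ[k] d)) := by
  rw [LinearEquiv.eq_symm_apply, ← θi.θ_str]; simp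

theorem aux_nu_str (θi : NIntegral hA hC) (dM : DoiMod hA hC M) (x : M ⊗[k] C) :
    nuMap θi.θ dM (TensorProduct.map dM.str.toLinearMap hC.str.toLinearMap x) =
      dM.str (nuMap θi.θ dM x) := by
  induction x with
  | zero => simp
  | add x y hx hy => simp only [map_add, hx, hy]
  | tmul m c =>
    simp only [nuMap, TensorProduct.map_tmul, LinearMap.comp_apply, LinearEquiv.coe_coe,
      dM.coact_str, LinearEquiv.symm_apply_apply]
    generalize dM.coact m = t
    induction t with
    | zero => simp
    | add x y hx hy => simp only [map_add, TensorProduct.add_tmul, hx, hy]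
    | tmul m d =>
      simp only [TensorProduct.map_tmul, TensorProduct.assoc_tmul, TensorProduct.lift.tmul,
        LinearEquiv.coe_coe, dM.str_act, ← θi.θ_str, LinearEquiv.apply_symm_apply]

theorem aux_nu_coact (θi : NIntegral hA hC) (dM : DoiMod hA hC M) (m : M) :
    nuMap θi.θ dM (dM.coact m) = m := by
  simp only [nuMap, LinearMap.comp_apply, LinearEquiv.coe_coe, dM.hom_coassoc]
  have h := congrArg dM.str (dM.counit_coact m)
  rw [LinearEquiv.apply_symm_apply] at h
  refine Eq.trans ?_ h
  generalize dM.coact m = t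
  induction t with
  | zero => simp
  | add x y hx hy => simp only [map_add, hx, hy]
  | tmul m d =>
    simp [θi.cond2, dM.act_one]


theorem aux_nu_act0 (θi : NIntegral hA hC) (dM : DoiMod hA hC M) (m : M) (c : C)
    (s : A ⊗[k] H) :
    nuMap θi.θ dM (TensorProduct.map₂ dM.act hC.act (m ⊗ₜ[k] c) s) =
      TensorProduct.lift dM.act (TensorProduct.map dM.str.toLinearMap θi.θ
        (TensorProduct.assoc k M C C
        (TensorProduct.map (TensorProduct.map₂ dM.act hC.act (dM.coact m) ∘ₗ hA.coact)
          (hC.str.symm.toLinearMap ∘ₗ hC.act c) s))) := by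
  induction s with
  | zero => simp
  | add x y hx hy => simp only [map_add, hx, hy]
  | tmul p h => simp [nuMap, dM.compat]

theorem aux_nu_act1 (θi : NIntegral hA hC) (dM : DoiMod hA hC M) (c : C)
    (t : M ⊗[k] C) (a : A) :
      TensorProduct.lift dM.act (TensorProduct.map dM.str.toLinearMap θi.θ
        (TensorProduct.assoc k M C C
        (TensorProduct.map (TensorProduct.map₂ dM.act hC.act t ∘ₗ hA.coact)
          (hC.str.symm.toLinearMap ∘ₗ hC.act c)
          (TensorProduct.map hA.str.toLinearMap hH.str.toLinearMap (hA.coact a))))) =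
      dM.act (TensorProduct.lift dM.act (TensorProduct.map dM.str.toLinearMap θi.θ
        (TensorProduct.assoc k M C C (t ⊗ₜ[k] hC.str.symm c)))) (hA.str a) := by
  induction t with
  | zero => simp
  | add x y hx hy =>
    simp only [map_add, TensorProduct.add_tmul, LinearMap.add_apply, LinearMap.add_comp,
      TensorProduct.map_add_left, hx, hy]
  | tmul m d =>
    simp only [TensorProduct.assoc_tmul, TensorProduct.map_tmul, TensorProduct.lift.tmul,
      dM.act_act, ← θi.cond3]
    generalize hA.coact a = s
    induction s with
    | zero => simp
    | add x y hx hy => simp only [map_add, hx, hy]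
    | tmul p h =>
      simp only [TensorProduct.map_tmul, LinearMap.comp_apply, LinearEquiv.coe_coe, hA.coact_str]
      generalize hA.coact p = r
      induction r with
      | zero => simp
      | add x y hx hy => simp only [map_add, TensorProduct.add_tmul, hx, hy]
      | tmul q g =>
        have e1 : hC.act d (hH.str g) = hC.str (hC.act (hC.str.symm d) g) := by
          simp [hC.str_act]
        have e2 : hC.str.symm (hC.act c (hH.str h)) =
            hC.str (hC.act (hC.str.symm (hC.str.symm c)) (hH.str.symm h)) := by
          rw [LinearEquiv.symm_apply_eq]; simp [hC.str_act]
        simp only [TensorProduct.map_tmul, TensorProduct.assoc_tmul, TensorProduct.lift.tmul,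
          TensorProduct.map₂_apply_tmul, LinearMap.comp_apply, LinearEquiv.coe_coe,
          LinearMap.id_apply, e1, e2, θi.θ_str, dM.str_act, dM.act_act]

theorem aux_nu_act (θi : NIntegral hA hC) (dM : DoiMod hA hC M) (x : M ⊗[k] C) (a : A) :
    nuMap θi.θ dM (TensorProduct.map₂ dM.act hC.act x (hA.coact a)) =
      dM.act (nuMap θi.θ dM x) a := by
  obtain ⟨a, rfl⟩ := hA.str.surjective a
  induction x with
  | zero => simp
  | add x y hx hy => simp only [map_add, LinearMap.add_apply, hx, hy]
  | tmul m c =>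
    rw [aux_nu_act0, hA.coact_str, aux_nu_act1]
    simp [nuMap]

/-- auxiliary map -/
noncomputable def auxF (θi : NIntegral hA hC) (dM : DoiMod hA hC M) (c : C) :
    M ⊗[k] (C ⊗[k] C) →ₗ[k] M ⊗[k] C :=
  TensorProduct.lift (TensorProduct.map₂ dM.act hC.act) ∘ₗ
    TensorProduct.map (TensorProduct.map dM.str.toLinearMap hC.str.toLinearMap)
      (hA.coact ∘ₗ (TensorProduct.curry θi.θ).flip (hC.str.symm c) ∘ₗ hC.str.toLinearMap) ∘ₗ
    (TensorProduct.assoc k M C C).symm.toLinearMap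

theorem aux_F1 (θi : NIntegral hA hC) (dM : DoiMod hA hC M) (c : C) (m : M) :
    dM.coact (nuMap θi.θ dM (m ⊗ₜ[k] c)) =
      auxF θi dM c (TensorProduct.assoc k M C C
        (TensorProduct.map dM.coact hC.str.symm.toLinearMap (dM.coact m))) := by
  simp only [nuMap, auxF, LinearMap.comp_apply, LinearEquiv.coe_coe, TensorProduct.map_tmul,
    LinearEquiv.symm_apply_apply]
  generalize dM.coact m = t
  induction t with
  | zero => simp
  | add x y hx hy => simp only [map_add, TensorProduct.add_tmul, hx, hy]
  | tmul x d => simp [dM.compat, dM.coact_str]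

theorem aux_F2 (θi : NIntegral hA hC) (dM : DoiMod hA hC M) (c : C) (x : M) (d : C) :
    auxF θi dM c (dM.str.symm x ⊗ₜ[k] hC.comul d) =
      TensorProduct.map (dM.act x ∘ₗ hA.str.symm.toLinearMap ∘ₗ TensorProduct.curry θi.θ d)
        hC.str.toLinearMap (hC.comul c) := by
  have h := congrArg (TensorProduct.map (dM.act x ∘ₗ hA.str.symm.toLinearMap) LinearMap.id)
    (θi.cond1 c (hC.str d))
  rw [LinearEquiv.symm_apply_apply, ← LinearMap.comp_apply, ← TensorProduct.map_comp,
    LinearMap.id_comp, LinearMap.comp_assoc] at h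
  rw [h, hC.comul_str]
  generalize hC.comul d = t
  induction t with
  | zero => simp
  | add x y hx hy => simp only [map_add, TensorProduct.tmul_add, hx, hy]
  | tmul y z =>
    simp only [auxF, LinearMap.comp_apply, LinearEquiv.coe_coe, TensorProduct.map_tmul,
      TensorProduct.assoc_symm_tmul, TensorProduct.lift.tmul, LinearEquiv.apply_symm_apply]
    generalize hA.coact _ = r
    induction r with
    | zero => simp
    | add x y hx hy => simp only [map_add, TensorProduct.tmul_add, hx, hy]
    | tmul y z => simp

theorem aux_nu_colin (θi : NIntegral hA hC) (dM : DoiMod hA hC M) (x : M ⊗[k] C) :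
    dM.coact (nuMap θi.θ dM x) =
      TensorProduct.map (nuMap θi.θ dM) LinearMap.id (Gcoact hC.toHomCoalg dM.str x) := by
  induction x with
  | zero => simp
  | add x y hx hy => simp only [map_add, hx, hy]
  | tmul m c =>
    rw [aux_F1, dM.hom_coassoc]
    obtain ⟨m, rfl⟩ := dM.str.surjective m
    simp only [Gcoact, LinearMap.comp_apply, LinearEquiv.coe_coe, TensorProduct.map_tmul,
      LinearEquiv.symm_apply_apply, dM.coact_str]
    have h2 : ∀ s : C ⊗[k] C, TensorProduct.map (nuMap θi.θ dM) LinearMap.id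
        ((TensorProduct.assoc k M C C).symm (m ⊗ₜ[k]
          TensorProduct.map LinearMap.id hC.str.toLinearMap s)) =
        TensorProduct.map (TensorProduct.lift dM.act ∘ₗ
          TensorProduct.map dM.str.toLinearMap θi.θ ∘ₗ
          (TensorProduct.assoc k M C C).toLinearMap ∘ₗ
          TensorProduct.mk k _ _ (dM.coact m) ∘ₗ hC.str.symm.toLinearMap)
          hC.str.toLinearMap s := by
      intro s
      induction s with
      | zero => simp
      | add x y hx hy => simp only [map_add, TensorProduct.tmul_add, hx, hy]
      | tmul y z => simp [nuMap]
    rw [h2]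
    generalize dM.coact m = t
    induction t with
    | zero => simp
    | add x y hx hy =>
      simp only [map_add, hx, hy, LinearMap.add_comp, LinearMap.comp_add,
        TensorProduct.map_add_left, LinearMap.add_apply]
    | tmul x d =>
      simp only [TensorProduct.map_tmul, LinearEquiv.coe_coe, aux_F2]
      congr 2
      ext y
      obtain ⟨y, rfl⟩ := hC.str.surjective y
      simp [θi.θ_str]
end helpers

/-- Maschke, injective case: if a morphism `f` of Doi Hom-Hopf modules splits
as a morphism of right `(A, β)`-Hom-modules, then it splits in the category of
Doi Hom-Hopf modules. -/
theorem maschke_mono {k : Type*} [CommRing k] {H A C M N : Type*}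
    [AddCommGroup H] [Module k H] [AddCommGroup A] [Module k A]
    [AddCommGroup C] [Module k C] [AddCommGroup M] [Module k M] [AddCommGroup N] [Module k N]
    (hH : HomHopf k H) (hA : HomComodAlg hH.toHomBialg A) (hC : HomModCoalg hH.toHomBialg C)
    (θi : NIntegral hA hC) (dM : DoiMod hA hC M) (dN : DoiMod hA hC N)
    (f : M →ₗ[k] N) (hf : IsDoiHom dM dN f)
    (g : N →ₗ[k] M)
    (hg_str : ∀ n, g (dN.str n) = dM.str (g n))
    (hg_act : ∀ (n : N) (a : A), g (dN.act n a) = dM.act (g n) a)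
    (hgf : ∀ m : M, g (f m) = m) :
    ∃ g' : N →ₗ[k] M, IsDoiHom dN dM g' ∧ ∀ m : M, g' (f m) = m := by
  refine ⟨nuMap θi.θ dM ∘ₗ TensorProduct.map g LinearMap.id ∘ₗ dN.coact, ⟨?_, ?_, ?_⟩, ?_⟩
  · intro n
    simp only [LinearMap.comp_apply, dN.coact_str, ← aux_nu_str]
    congr 1
    generalize dN.coact n = t
    induction t with
    | zero => simp
    | add x y hx hy => simp only [map_add, hx, hy]
    | tmul x d => simp [hg_str]
  · intro n a
    simp only [LinearMap.comp_apply, dN.compat, ← aux_nu_act]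
    congr 1
    generalize dN.coact n = t
    generalize hA.coact a = s
    induction t with
    | zero => simp
    | add x y hx hy => simp only [map_add, LinearMap.add_apply, hx, hy]
    | tmul x d =>
      induction s with
      | zero => simp
      | add x y hx hy => simp only [map_add, hx, hy]
      | tmul p h => simp [hg_act]
  · intro n
    have hgs : ∀ n, g (dN.str.symm n) = dM.str.symm (g n) := by
      intro n
      rw [LinearEquiv.eq_symm_apply, ← hg_str, LinearEquiv.apply_symm_apply]
    rw [LinearMap.comp_apply, LinearMap.comp_apply, aux_nu_colin]
    have e : TensorProduct.map (nuMap θi.θ dM ∘ₗ TensorProduct.map g LinearMap.id ∘ₗ dN.coact)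
        LinearMap.id (dN.coact n) = TensorProduct.map (nuMap θi.θ dM) LinearMap.id
        (TensorProduct.map (TensorProduct.map g LinearMap.id) hC.str.toLinearMap
          ((TensorProduct.assoc k N C C).symm (TensorProduct.assoc k N C C
          (TensorProduct.map dN.coact hC.str.symm.toLinearMap (dN.coact n))))) := by
      rw [LinearEquiv.symm_apply_apply]
      generalize dN.coact n = t
      induction t with
      | zero => simp
      | add x y hx hy => simp only [map_add, hx, hy]
      | tmul x d => simp
    rw [e, dN.hom_coassoc]
    congr 1
    generalize dN.coact n = t
    induction t with
    | zero => simp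
    | add x y hx hy => simp only [map_add, hx, hy]
    | tmul x d =>
      simp only [Gcoact, LinearMap.comp_apply, LinearEquiv.coe_coe, TensorProduct.map_tmul,
        LinearMap.id_apply]
      generalize hC.comul d = s
      induction s with
      | zero => simp
      | add x y hx hy => simp only [map_add, TensorProduct.tmul_add, hx, hy]
      | tmul y z => simp [hgs]
  · intro m
    have e : TensorProduct.map g LinearMap.id (TensorProduct.map f LinearMap.id (dM.coact m))
        = dM.coact m := by
      generalize dM.coact m = t
      induction t with
      | zero => simp
      | add x y hx hy => simp only [map_add, hx, hy]
      | tmul x d => simp [hgf]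
    rw [LinearMap.comp_apply, LinearMap.comp_apply, hf.coact_comm, e, aux_nu_coact]
end

section
/- (Maschke-type theorem, surjective case.) Let (H, A, C) be a Doi Hom-Hopf datum admitting a normalized (A,β)-integral θ : C⊗C → A, and let f : (M,μ) → (N,ν) be a morphism of Doi Hom-Hopf modules. If there exists a k-linear map g : N → M with g∘ν = μ∘g, g(n·a) = g(n)·a for all n ∈ N, a ∈ A, and f∘g = id_N (i.e. f splits as a morphism of right (A,β)-Hom-modules), then there exists a morphism of Doi Hom-Hopf modules g' : N → M with f∘g' = id_N (i.e. f splits in the category of Doi Hom-Hopf modules). -/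
open TensorProduct

open DoiHomHopf

namespace DoiHomHopf

section Aux

variable {k : Type*} [CommRing k] {H A C : Type*}
    [AddCommGroup H] [Module k H] [AddCommGroup A] [Module k A] [AddCommGroup C] [Module k C]
    {hH : HomBialg k H} {hA : HomComodAlg hH A} {hC : HomModCoalg hH C}
    {M N : Type*} [AddCommGroup M] [Module k M] [AddCommGroup N] [Module k N]

theorem symm_actC (c : C) (h : H) :
    hC.str.symm (hC.act c h) = hC.act (hC.str.symm c) (hH.str.symm h) := by
  rw [LinearEquiv.symm_apply_eq, hC.str_act]; simp

theorem symm_mulA (a b : A) :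
    hA.str.symm (hA.mul a b) = hA.mul (hA.str.symm a) (hA.str.symm b) := by
  rw [LinearEquiv.symm_apply_eq, hA.str_mul]; simp

theorem theta_symm (θi : NIntegral hA hC) (c d : C) :
    hA.str.symm (θi.θ (c ⊗ₜ d)) = θi.θ (hC.str.symm c ⊗ₜ hC.str.symm d) := by
  rw [LinearEquiv.symm_apply_eq, ← θi.θ_str]; simp

theorem coact_symm (dM : DoiMod hA hC M) (m : M) :
    dM.coact (dM.str.symm m) =
      TensorProduct.map dM.str.symm.toLinearMap hC.str.symm.toLinearMap (dM.coact m) := by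
  obtain ⟨n, rfl⟩ := dM.str.surjective m
  rw [dM.coact_str]
  generalize hx : dM.coact n = x
  rw [LinearEquiv.symm_apply_apply, hx]
  clear hx
  induction x using TensorProduct.induction_on with
  | zero => simp
  | tmul a b => simp
  | add x y hx hy => simp only [map_add, ← hx, ← hy]

theorem act_act' (dM : DoiMod hA hC M) (m : M) (a b : A) :
    dM.act (dM.act m a) b = dM.act (dM.str m) (hA.mul a (hA.str.symm b)) := by
  rw [← dM.act_act]; simp

theorem nu_tmul (θ : C ⊗[k] C →ₗ[k] A) (dM : DoiMod hA hC M) (m : M) (c : C) :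
    nuMap θ dM (m ⊗ₜ c) = TensorProduct.lift dM.act (TensorProduct.map dM.str.toLinearMap θ
      (TensorProduct.assoc k M C C (dM.coact m ⊗ₜ hC.str.symm c))) := by
  simp [nuMap]

theorem nu_str (θi : NIntegral hA hC) (dM : DoiMod hA hC M) (m : M) (c : C) :
    nuMap θi.θ dM (dM.str m ⊗ₜ hC.str c) = dM.str (nuMap θi.θ dM (m ⊗ₜ c)) := by
  rw [nu_tmul, nu_tmul, dM.coact_str]
  generalize dM.coact m = x
  induction x using TensorProduct.induction_on with
  | zero => simp
  | tmul a b =>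
    simp only [TensorProduct.map_tmul, TensorProduct.assoc_tmul, TensorProduct.lift.tmul,
      LinearEquiv.coe_coe, dM.str_act, ← θi.θ_str]
    simp
  | add x y hx hy => simp only [map_add, TensorProduct.add_tmul, hx, hy]

theorem nu_act (θi : NIntegral hA hC) (dM : DoiMod hA hC M) (m : M) (c : C) (a : A) :
    nuMap θi.θ dM (TensorProduct.map₂ dM.act hC.act (m ⊗ₜ c) (hA.coact a)) =
      dM.act (nuMap θi.θ dM (m ⊗ₜ c)) a := by
  have step1 : ∀ y : A ⊗[k] H,
      nuMap θi.θ dM (TensorProduct.map₂ dM.act hC.act (m ⊗ₜ c) y) =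
      TensorProduct.lift dM.act (TensorProduct.map dM.str.toLinearMap θi.θ
      (TensorProduct.assoc k M C C
        (TensorProduct.map₂ (TensorProduct.map₂ dM.act hC.act) hC.act
          (dM.coact m ⊗ₜ hC.str.symm c)
          (TensorProduct.map hA.coact hH.str.symm.toLinearMap y)))) := by
    intro y
    induction y using TensorProduct.induction_on with
    | zero => simp
    | tmul a h =>
      rw [TensorProduct.map₂_apply_tmul, TensorProduct.map_tmul, nu_tmul, dM.compat, symm_actC, TensorProduct.map_tmul,
        TensorProduct.map₂_apply_tmul]
      rfl
    | add x y hx hy => simp only [map_add, hx, hy]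
  have step2 : ∀ (m₀ : M) (m₁ : C) (z : (A ⊗[k] H) ⊗[k] H),
      TensorProduct.lift dM.act (TensorProduct.map dM.str.toLinearMap θi.θ
      (TensorProduct.assoc k M C C
        (TensorProduct.map₂ (TensorProduct.map₂ dM.act hC.act) hC.act
          ((m₀ ⊗ₜ m₁) ⊗ₜ hC.str.symm c) z))) =
      dM.act (dM.str (dM.str m₀)) (hA.str.symm
        (TensorProduct.lift hA.mul
      (TensorProduct.map LinearMap.id θi.θ
        ((TensorProduct.assoc k A C C)
          (TensorProduct.map
            (TensorProduct.map (hA.str.toLinearMap ∘ₗ hA.str.toLinearMap)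
              (hC.act (hC.str.symm (hC.str m₁))))
            (hC.act (hC.str.symm c)) z))))) := by
    intro m₀ m₁ z
    induction z using TensorProduct.induction_on with
    | zero => simp
    | add x y hx hy => simp only [map_add, hx, hy]
    | tmul w h =>
      induction w using TensorProduct.induction_on with
      | zero => simp
      | add x y hx hy => simp only [map_add, TensorProduct.add_tmul, hx, hy]
      | tmul b g =>
        simp only [TensorProduct.map₂_apply_tmul, TensorProduct.map_tmul,
          TensorProduct.assoc_tmul, TensorProduct.lift.tmul, LinearEquiv.coe_coe,
          LinearMap.comp_apply, LinearMap.id_apply, symm_mulA, dM.str_act, act_act',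
          LinearEquiv.symm_apply_apply]
  rw [step1, nu_tmul]
  generalize dM.coact m = x
  induction x using TensorProduct.induction_on with
  | zero => simp
  | add x y hx hy =>
    simp only [map_add, TensorProduct.add_tmul, LinearMap.add_apply] at hx hy ⊢
    rw [hx, hy]
  | tmul m₀ m₁ =>
    rw [step2, θi.cond3, symm_mulA, theta_symm]
    simp only [TensorProduct.map_tmul, TensorProduct.assoc_tmul, TensorProduct.lift.tmul,
      LinearEquiv.coe_coe, act_act', LinearEquiv.symm_apply_apply]

theorem nu_coact (θi : NIntegral hA hC) (dM : DoiMod hA hC M) (m : M) (c : C) :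
    dM.coact (nuMap θi.θ dM (m ⊗ₜ c)) =
      TensorProduct.map (nuMap θi.θ dM) LinearMap.id (Gcoact hC.toHomCoalg dM.str (m ⊗ₜ c)) := by
  obtain ⟨c, rfl⟩ := hC.str.surjective c
  let G : M ⊗[k] (C ⊗[k] C) →ₗ[k] M ⊗[k] C :=
    TensorProduct.lift (TensorProduct.map₂ dM.act hC.act) ∘ₗ
      TensorProduct.map (TensorProduct.map dM.str.toLinearMap hC.str.toLinearMap)
        (hA.coact ∘ₗ (TensorProduct.curry θi.θ).flip c ∘ₗ hC.str.toLinearMap) ∘ₗ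
      (TensorProduct.assoc k M C C).symm.toLinearMap
  have hG : ∀ m d e, G (m ⊗ₜ (d ⊗ₜ e)) = TensorProduct.map₂ dM.act hC.act
      (dM.str m ⊗ₜ hC.str d) (hA.coact (θi.θ (hC.str e ⊗ₜ c))) := by
    intro m d e
    simp [G]
  have s1 : ∀ x : M ⊗[k] C, dM.coact (TensorProduct.lift dM.act
      (TensorProduct.map dM.str.toLinearMap θi.θ (TensorProduct.assoc k M C C (x ⊗ₜ c)))) =
      G (TensorProduct.assoc k M C C
        (TensorProduct.map dM.coact hC.str.symm.toLinearMap x)) := by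
    intro x
    induction x using TensorProduct.induction_on with
    | zero => simp
    | add x y hx hy => simp only [map_add, TensorProduct.add_tmul, hx, hy]
    | tmul m₀ m₁ =>
      simp only [TensorProduct.map_tmul, TensorProduct.assoc_tmul, TensorProduct.lift.tmul,
        LinearEquiv.coe_coe, dM.compat, dM.coact_str]
      generalize dM.coact m₀ = w
      induction w using TensorProduct.induction_on with
      | zero => simp
      | add x y hx hy =>
        simp only [map_add, TensorProduct.add_tmul, LinearMap.add_apply, hx, hy]
      | tmul a b =>
        rw [TensorProduct.assoc_tmul, hG]
        simp
  have s2 : ∀ (m₀ : M) (w : C ⊗[k] C), G (dM.str.symm m₀ ⊗ₜ w) =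
      TensorProduct.map (dM.act m₀) hC.str.toLinearMap
      (TensorProduct.map hA.str.toLinearMap (TensorProduct.lift hC.act)
        ((TensorProduct.assoc k A C H)
          (TensorProduct.map (TensorProduct.comm k C A).toLinearMap LinearMap.id
            ((TensorProduct.assoc k C A H).symm
              (TensorProduct.map LinearMap.id
                (hA.coact ∘ₗ (TensorProduct.curry θi.θ).flip (hC.str.symm c)) w))))) := by
    intro m₀ w
    induction w using TensorProduct.induction_on with
    | zero => simp
    | add x y hx hy => simp only [map_add, TensorProduct.tmul_add, hx, hy]
    | tmul d e =>
      have : θi.θ (hC.str e ⊗ₜ c) = hA.str (θi.θ (e ⊗ₜ hC.str.symm c)) := by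
        rw [← θi.θ_str]; simp
      rw [hG, this, hA.coact_str]
      simp only [TensorProduct.map_tmul, LinearMap.comp_apply, LinearMap.flip_apply,
        TensorProduct.curry_apply, LinearMap.id_apply]
      generalize hA.coact (θi.θ (e ⊗ₜ hC.str.symm c)) = y
      induction y using TensorProduct.induction_on with
      | zero => simp
      | add x y hx hy => simp only [map_add, TensorProduct.tmul_add, hx, hy]
      | tmul a h => simp [hC.str_act]
  rw [nu_tmul, LinearEquiv.symm_apply_apply, s1, dM.hom_coassoc]
  let L : (M ⊗[k] C) →ₗ[k] C →ₗ[k] M := TensorProduct.curry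
    (TensorProduct.lift dM.act ∘ₗ TensorProduct.map dM.str.toLinearMap θi.θ ∘ₗ
      (TensorProduct.assoc k M C C).toLinearMap) ∘ₗ
      TensorProduct.map dM.str.symm.toLinearMap hC.str.symm.toLinearMap
  have r1 : ∀ w : C ⊗[k] C, TensorProduct.map (nuMap θi.θ dM) LinearMap.id
      ((TensorProduct.assoc k M C C).symm (dM.str.symm m ⊗ₜ
        (TensorProduct.map LinearMap.id hC.str.toLinearMap
          (TensorProduct.map hC.str.toLinearMap hC.str.toLinearMap w)))) =
      TensorProduct.map (L (dM.coact m)) (hC.str.toLinearMap ∘ₗ hC.str.toLinearMap) w := by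
    intro w
    induction w using TensorProduct.induction_on with
    | zero => simp
    | add x y hx hy => simp only [map_add, TensorProduct.tmul_add, hx, hy]
    | tmul d e =>
      simp only [TensorProduct.map_tmul, TensorProduct.assoc_symm_tmul, nu_tmul, coact_symm,
        LinearEquiv.coe_coe, LinearEquiv.symm_apply_apply, LinearMap.id_apply,
        LinearMap.comp_apply, L, TensorProduct.curry_apply]
  have r2 : TensorProduct.map (nuMap θi.θ dM) LinearMap.id
      (Gcoact hC.toHomCoalg dM.str (m ⊗ₜ hC.str c)) =
      TensorProduct.map (L (dM.coact m)) (hC.str.toLinearMap ∘ₗ hC.str.toLinearMap)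
        (hC.comul c) := by
    rw [← r1, ← hC.comul_str]
    simp [Gcoact]
  rw [r2]
  generalize dM.coact m = x
  induction x using TensorProduct.induction_on with
  | zero => simp
  | add x y hx hy =>
    simp only [map_add, TensorProduct.map_add_left, LinearMap.add_apply, hx, hy]
  | tmul m₀ m₁ =>
    rw [TensorProduct.map_tmul, LinearEquiv.coe_coe, s2, ← θi.cond1]
    generalize hC.comul c = w
    induction w using TensorProduct.induction_on with
    | zero => simp
    | add x y hx hy => simp only [map_add, hx, hy]
    | tmul d e => simp [L]

theorem nu_act' (θi : NIntegral hA hC) (dM : DoiMod hA hC M) (x : M ⊗[k] C) (a : A) :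
    nuMap θi.θ dM (TensorProduct.map₂ dM.act hC.act x (hA.coact a)) =
      dM.act (nuMap θi.θ dM x) a := by
  induction x using TensorProduct.induction_on with
  | zero => simp
  | add x y hx hy => simp only [map_add, LinearMap.add_apply, hx, hy]
  | tmul m c => exact nu_act θi dM m c a

theorem nu_coact' (θi : NIntegral hA hC) (dM : DoiMod hA hC M) (x : M ⊗[k] C) :
    dM.coact (nuMap θi.θ dM x) =
      TensorProduct.map (nuMap θi.θ dM) LinearMap.id (Gcoact hC.toHomCoalg dM.str x) := by
  induction x using TensorProduct.induction_on with
  | zero => simp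
  | add x y hx hy => simp only [map_add, hx, hy]
  | tmul m c => exact nu_coact θi dM m c

/-- `Gcoact` on the image of the coaction. -/
theorem Gcoact_coact (dN : DoiMod hA hC N) (n : N) :
    Gcoact hC.toHomCoalg dN.str (dN.coact n) =
      TensorProduct.map dN.coact LinearMap.id (dN.coact n) := by
  have e1 : ∀ x : N ⊗[k] C, Gcoact hC.toHomCoalg dN.str x =
      TensorProduct.map LinearMap.id hC.str.toLinearMap ((TensorProduct.assoc k N C C).symm
        (TensorProduct.map dN.str.symm.toLinearMap hC.comul x)) := by
    intro x
    induction x using TensorProduct.induction_on with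
    | zero => simp
    | add x y hx hy => simp only [map_add, hx, hy]
    | tmul m c =>
      simp only [Gcoact, LinearMap.comp_apply, TensorProduct.map_tmul, LinearEquiv.coe_coe]
      generalize hC.comul c = w
      induction w using TensorProduct.induction_on with
      | zero => simp
      | add x y hx hy => simp only [map_add, TensorProduct.tmul_add, hx, hy]
      | tmul d e => simp
  rw [e1, ← dN.hom_coassoc, LinearEquiv.symm_apply_apply]
  generalize dN.coact n = x
  induction x using TensorProduct.induction_on with
  | zero => simp
  | add x y hx hy => simp only [map_add, hx, hy]
  | tmul m c => simp

theorem Gcoact_map (dM : DoiMod hA hC M) (dN : DoiMod hA hC N) (g : N →ₗ[k] M)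
    (hg : ∀ n, g (dN.str n) = dM.str (g n)) (x : N ⊗[k] C) :
    Gcoact hC.toHomCoalg dM.str (TensorProduct.map g LinearMap.id x) =
      TensorProduct.map (TensorProduct.map g LinearMap.id) LinearMap.id
        (Gcoact hC.toHomCoalg dN.str x) := by
  have hg' : ∀ n, dM.str.symm (g n) = g (dN.str.symm n) := by
    intro n
    rw [LinearEquiv.symm_apply_eq, ← hg, LinearEquiv.apply_symm_apply]
  induction x using TensorProduct.induction_on with
  | zero => simp
  | add x y hx hy => simp only [map_add, hx, hy]
  | tmul n c =>
    simp only [Gcoact, LinearMap.comp_apply, TensorProduct.map_tmul, LinearEquiv.coe_coe,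
      LinearMap.id_apply, hg']
    generalize hC.comul c = w
    induction w using TensorProduct.induction_on with
    | zero => simp
    | add x y hx hy => simp only [map_add, TensorProduct.tmul_add, hx, hy]
    | tmul d e => simp

theorem nu_natural (θ : C ⊗[k] C →ₗ[k] A) {dM : DoiMod hA hC M} {dN : DoiMod hA hC N}
    {f : M →ₗ[k] N} (hf : IsDoiHom dM dN f) (x : M ⊗[k] C) :
    f (nuMap θ dM x) = nuMap θ dN (TensorProduct.map f LinearMap.id x) := by
  induction x using TensorProduct.induction_on with
  | zero => simp
  | add x y hx hy => simp only [map_add, hx, hy]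
  | tmul m c =>
    rw [TensorProduct.map_tmul, nu_tmul, nu_tmul, hf.coact_comm]
    generalize dM.coact m = x
    induction x using TensorProduct.induction_on with
    | zero => simp
    | add x y hx hy => simp only [map_add, TensorProduct.add_tmul, hx, hy]
    | tmul d e => simp [hf.act_comm, hf.str_comm]

theorem nu_coact_self (θi : NIntegral hA hC) (dN : DoiMod hA hC N) (n : N) :
    nuMap θi.θ dN (dN.coact n) = n := by
  simp only [nuMap, LinearMap.comp_apply, LinearEquiv.coe_coe]
  rw [dN.hom_coassoc]
  have : n = dN.str (TensorProduct.rid k N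
      (TensorProduct.map LinearMap.id hC.counit (dN.coact n))) := by
    rw [dN.counit_coact, LinearEquiv.apply_symm_apply]
  conv_rhs => rw [this]
  generalize dN.coact n = x
  induction x using TensorProduct.induction_on with
  | zero => simp
  | add x y hx hy => simp only [map_add, hx, hy]
  | tmul d e => simp [θi.cond2, dN.act_one]

end Aux

end DoiHomHopf

/-- Maschke, surjective case: if a morphism `f` of Doi Hom-Hopf modules admits
a right inverse as a morphism of right `(A, β)`-Hom-modules, then it admits a right inverse
in the category of Doi Hom-Hopf modules. -/
theorem maschke_epi {k : Type*} [CommRing k] {H A C M N : Type*}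
    [AddCommGroup H] [Module k H] [AddCommGroup A] [Module k A]
    [AddCommGroup C] [Module k C] [AddCommGroup M] [Module k M] [AddCommGroup N] [Module k N]
    (hH : HomHopf k H) (hA : HomComodAlg hH.toHomBialg A) (hC : HomModCoalg hH.toHomBialg C)
    (θi : NIntegral hA hC) (dM : DoiMod hA hC M) (dN : DoiMod hA hC N)
    (f : M →ₗ[k] N) (hf : IsDoiHom dM dN f)
    (g : N →ₗ[k] M)
    (hg_str : ∀ n, g (dN.str n) = dM.str (g n))
    (hg_act : ∀ (n : N) (a : A), g (dN.act n a) = dM.act (g n) a)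
    (hfg : ∀ n : N, f (g n) = n) :
    ∃ g' : N →ₗ[k] M, IsDoiHom dN dM g' ∧ ∀ n : N, f (g' n) = n := by
  refine ⟨nuMap θi.θ dM ∘ₗ TensorProduct.map g LinearMap.id ∘ₗ dN.coact, ⟨?_, ?_, ?_⟩, ?_⟩
  · intro n
    simp only [LinearMap.comp_apply, dN.coact_str]
    generalize dN.coact n = x
    induction x using TensorProduct.induction_on with
    | zero => simp
    | add x y hx hy => simp only [map_add, hx, hy]
    | tmul d e => simp [hg_str, nu_str]
  · intro n a
    simp only [LinearMap.comp_apply, dN.compat]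
    rw [← nu_act']
    congr 1
    generalize dN.coact n = x
    generalize hA.coact a = y
    induction x using TensorProduct.induction_on with
    | zero => simp
    | add x y hx hy => simp only [map_add, LinearMap.add_apply, hx, hy]
    | tmul d e =>
      induction y using TensorProduct.induction_on with
      | zero => simp
      | add x y hx hy => simp only [map_add, hx, hy]
      | tmul b h => simp [hg_act]
  · intro n
    simp only [LinearMap.comp_apply]
    rw [nu_coact', Gcoact_map dM dN g hg_str, Gcoact_coact]
    generalize dN.coact n = x
    induction x using TensorProduct.induction_on with
    | zero => simp
    | add x y hx hy => simp only [map_add, hx, hy]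
    | tmul d e => simp
  · intro n
    simp only [LinearMap.comp_apply]
    rw [nu_natural θi.θ hf, ← LinearMap.comp_apply (TensorProduct.map f LinearMap.id), ← TensorProduct.map_comp]
    have : f ∘ₗ g = LinearMap.id := LinearMap.ext hfg
    rw [this, LinearMap.id_comp, TensorProduct.map_id, LinearMap.id_apply, nu_coact_self]
end
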